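/- Let G be a finite simple graph with n ≥ 2 vertices and edge weights w : E(G) → ℕ. Then there exists a tree embedding (T,b) of G with Σ_{t∈V(T)} 2^{con(t)} ≤ (2n−2)·2^{vc(G)}, and there also exists a tree embedding (T,b) of G with Σ_{t∈V(T)} 2^{con(t)} ≤ (2n−2)·2^{⌈3·ec(G)/2⌉}. -/

import Mathlib

/-!
Take a tree embedding that attains `vcG`, respectively `ecG`. Counting degrees in a cubic tree
gives `2 * #leaves = |T| + 2` (`ncard_leaves`), so `T` has `2 * |V| - 2` vertices, and it suffices
to bound the congestion of each tree vertex `t` separately. For vertex congestion the bound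
`conV t ≤ vc` holds by definition. For edge congestion, a routing through an internal vertex `t`
uses at least two of the three tree edges at `t`, hence `2 * conV t ≤ 3 * ec`; a routing through a
leaf `t` uses the only edge at `t`, hence `conV t ≤ ec` (`mul_conV_le`, `conV_le`).

The minima are infima of sets of naturals, which would be the junk value `0` on an empty set. So
it is also needed that some cubic tree with `|V|` leaves exists: a caterpillar on
`Fin (2 * |V| - 2)` is built in `exists_cubic_tree`, and the same degree count shows that it has
the right number of leaves.
-/

open SimpleGraph Finset
open scoped Classical

noncomputable section

/-- A tree embedding of a simple graph `G` into a cubic tree on vertex type `W`: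
a finite tree `T` all of whose vertices have degree 1 or 3, together with a bijection
`b` from the vertices of `G` to the leaves of `T`. -/
structure TreeEmbedding {V : Type} (G : SimpleGraph V) (W : Type) [Fintype W] where
  T : SimpleGraph W
  b : V → W
  isTree : T.IsTree
  cubic : ∀ t : W, (T.neighborSet t).ncard = 1 ∨ (T.neighborSet t).ncard = 3
  leaf_b : ∀ v : V, (T.neighborSet (b v)).ncard = 1
  inj : Function.Injective b
  surj_leaf : ∀ t : W, (T.neighborSet t).ncard = 1 → ∃ v : V, b v = t

variable {V W : Type} [Fintype V] [Fintype W]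

/-- The routing of the edge `e` of `G` passes through the vertex `t` of the tree. -/
def RoutesThruV {G : SimpleGraph V} (E : TreeEmbedding G W) (e : Sym2 V) (t : W) : Prop :=
  ∃ u v : V, e = s(u, v) ∧ ∃ p : E.T.Walk (E.b u) (E.b v), p.IsPath ∧ t ∈ p.support

/-- The routing of the edge `e` of `G` passes through the edge `f` of the tree. -/
def RoutesThruE {G : SimpleGraph V} (E : TreeEmbedding G W) (e : Sym2 V) (f : Sym2 W) : Prop :=
  ∃ u v : V, e = s(u, v) ∧ ∃ p : E.T.Walk (E.b u) (E.b v), p.IsPath ∧ f ∈ p.edges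

/-- The (weighted) congestion of a vertex `t` of the tree. -/
def conV {G : SimpleGraph V} (E : TreeEmbedding G W) (w : Sym2 V → ℕ) (t : W) : ℕ :=
  ∑ e ∈ G.edgeFinset.filter (fun e => RoutesThruV E e t), w e

/-- The (weighted) congestion of an edge `f` of the tree. -/
def conE {G : SimpleGraph V} (E : TreeEmbedding G W) (w : Sym2 V → ℕ) (f : Sym2 W) : ℕ :=
  ∑ e ∈ G.edgeFinset.filter (fun e => RoutesThruE E e f), w e

/-- The vertex congestion of a tree embedding. -/
def vcOf {G : SimpleGraph V} (E : TreeEmbedding G W) (w : Sym2 V → ℕ) : ℕ :=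
  Finset.univ.sup (conV E w)

/-- The edge congestion of a tree embedding. -/
def ecOf {G : SimpleGraph V} (E : TreeEmbedding G W) (w : Sym2 V → ℕ) : ℕ :=
  E.T.edgeFinset.sup (conE E w)

/-- The vertex congestion of a graph: minimum over tree embeddings. -/
def vcG (G : SimpleGraph V) (w : Sym2 V → ℕ) : ℕ :=
  sInf {k | ∃ (n : ℕ) (E : TreeEmbedding G (Fin n)), vcOf E w = k}

/-- The edge congestion of a graph: minimum over tree embeddings. -/
def ecG (G : SimpleGraph V) (w : Sym2 V → ℕ) : ℕ :=
  sInf {k | ∃ (n : ℕ) (E : TreeEmbedding G (Fin n)), ecOf E w = k}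

/-- A branch decomposition of a simple graph `H`: a cubic tree together with a bijection
from the edges of `H` to the leaves of the tree. -/
structure BranchDecomp {U : Type} (H : SimpleGraph U) (W : Type) [Fintype W] where
  T : SimpleGraph W
  b : H.edgeSet → W
  isTree : T.IsTree
  cubic : ∀ t : W, (T.neighborSet t).ncard = 1 ∨ (T.neighborSet t).ncard = 3
  leaf_b : ∀ e : H.edgeSet, (T.neighborSet (b e)).ncard = 1
  inj : Function.Injective b
  surj_leaf : ∀ t : W, (T.neighborSet t).ncard = 1 → ∃ e : H.edgeSet, b e = t

variable {U : Type} [Fintype U]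

/-- The vertex `t` of the tree lies on the subtree `S_v` (the minimal subtree of `T`
containing all leaves `b e` with `e` incident to `v`). -/
def InSubtreeV {H : SimpleGraph U} {W : Type} [Fintype W] (D : BranchDecomp H W) (v : U)
    (t : W) : Prop :=
  ∃ e₁ e₂ : H.edgeSet, v ∈ (e₁ : Sym2 U) ∧ v ∈ (e₂ : Sym2 U) ∧
    ∃ p : D.T.Walk (D.b e₁) (D.b e₂), p.IsPath ∧ t ∈ p.support

/-- The edge `f` of the tree lies on the subtree `S_v`. -/
def InSubtreeE {H : SimpleGraph U} {W : Type} [Fintype W] (D : BranchDecomp H W) (v : U)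
    (f : Sym2 W) : Prop :=
  ∃ e₁ e₂ : H.edgeSet, v ∈ (e₁ : Sym2 U) ∧ v ∈ (e₂ : Sym2 U) ∧
    ∃ p : D.T.Walk (D.b e₁) (D.b e₂), p.IsPath ∧ f ∈ p.edges

/-- The width of an edge `f` of the tree of a branch decomposition. -/
def widthE {H : SimpleGraph U} {W : Type} [Fintype W] (D : BranchDecomp H W) (f : Sym2 W) : ℕ :=
  (Finset.univ.filter (fun v : U => InSubtreeE D v f)).card

/-- The width of a branch decomposition. -/
def widthOf {H : SimpleGraph U} {W : Type} [Fintype W] (D : BranchDecomp H W) : ℕ :=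
  D.T.edgeFinset.sup (widthE D)

/-- The branchwidth of a simple graph (0 if it admits no branch decomposition). -/
def branchwidth (H : SimpleGraph U) : ℕ :=
  sInf {k | ∃ (n : ℕ) (D : BranchDecomp H (Fin n)), widthOf D = k}

/-- The maximum degree of a finite simple graph. -/
def maxDeg (G : SimpleGraph V) : ℕ :=
  Finset.univ.sup (fun v => (G.neighborSet v).ncard)

/-- The weighted degree of a vertex. -/
def degw (G : SimpleGraph V) (w : Sym2 V → ℕ) (v : V) : ℕ :=
  ∑ e ∈ G.edgeFinset.filter (fun e => v ∈ e), w e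

end

/-! ### Cubic trees: number of leaves and existence -/

/-- A cubic tree with `L` leaves has `2 * L - 2` vertices. -/
lemma ncard_leaves {W : Type} [Fintype W] (T : SimpleGraph W) (hT : T.IsTree)
    (hc : ∀ t : W, (T.neighborSet t).ncard = 1 ∨ (T.neighborSet t).ncard = 3) :
    2 * {t : W | (T.neighborSet t).ncard = 1}.ncard = Fintype.card W + 2 := by
  have hd : ∀ t, T.degree t = (T.neighborSet t).ncard := fun t => by
    rw [Set.ncard_eq_toFinset_card', ← card_neighborFinset_eq_degree]; rfl
  have h1 := T.sum_degrees_eq_twice_card_edges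
  have h2 := hT.card_edgeFinset
  have h3 : ∑ t, (T.degree t + 2 * (if (T.neighborSet t).ncard = 1 then 1 else 0))
      = ∑ _t : W, 3 := by
    refine Finset.sum_congr rfl fun t _ => ?_
    rw [hd t]
    rcases hc t with h | h <;> simp [h]
  rw [Finset.sum_add_distrib, ← Finset.mul_sum, Finset.sum_boole, h1] at h3
  simp only [Finset.sum_const, Finset.card_univ, smul_eq_mul, Nat.cast_id] at h3
  have h4 : {t : W | (T.neighborSet t).ncard = 1}.ncard
      = (Finset.univ.filter fun t => (T.neighborSet t).ncard = 1).card := by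
    rw [← Set.ncard_coe_finset]; congr 1; ext; simp
  omega

/-- Parent function of the caterpillar: the spine is `0, 1, 3, 5, …`, and a leaf `2 * k` with
`k ≥ 1` hangs from the spine vertex `2 * k - 1`. Truncated subtraction gives `par 1 = 0`, as
desired, and makes the root `0` its own parent. -/
def par (i : ℕ) : ℕ := if i % 2 = 1 then i - 2 else i - 1

/-- The caterpillar on `Fin n` given by the parent function `par`. -/
def caterpillar (n : ℕ) : SimpleGraph (Fin n) where
  Adj i j := i ≠ j ∧ (par i = j ∨ par j = i)
  symm := ⟨fun _ _ h => ⟨h.1.symm, h.2.symm⟩⟩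
  loopless := ⟨fun _ h => h.1 rfl⟩

lemma par_lt {i : ℕ} (h : 0 < i) : par i < i := by
  unfold par; split_ifs <;> omega

lemma caterpillar_isTree {n : ℕ} (hn : 0 < n) : (caterpillar n).IsTree := by
  have hc : (caterpillar n).Connected := by
    refine (connected_iff_exists_forall_reachable _).2 ⟨⟨0, hn⟩, ?_⟩
    have key : ∀ k (hk : k < n), (caterpillar n).Reachable ⟨0, hn⟩ ⟨k, hk⟩ := by
      intro k
      induction k using Nat.strong_induction_on with
      | _ k ih =>
        intro hk
        rcases Nat.eq_zero_or_pos k with rfl | h0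
        · exact Reachable.refl _
        · have hp := par_lt h0
          refine (ih _ hp (hp.trans hk)).trans (Adj.reachable ⟨?_, Or.inr rfl⟩)
          intro h
          have := congrArg Fin.val h
          simp only at this
          omega
    exact fun w => key w.1 w.2
  refine isTree_iff_connected_and_card.2 ⟨hc, ?_⟩
  have h1 := hc.card_vert_le_card_edgeSet_add_one
  -- Every edge is of the form `{i + 1, par (i + 1)}`, so there are at most `n - 1` of them.
  let f : Fin (n - 1) → Sym2 (Fin n) := fun i =>
    s(⟨i + 1, by omega⟩, ⟨par (i + 1), by have := par_lt (i := i.1 + 1) (by omega); omega⟩)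
  have hsub : (caterpillar n).edgeSet ⊆ Set.range f := by
    have aux : ∀ a b : Fin n, a ≠ b → par a = b → s(a, b) ∈ Set.range f := by
      intro a b hab h
      have ha : 0 < a.1 := by
        rcases Nat.eq_zero_or_pos a.1 with h0 | h0
        · exact absurd (Fin.ext (by rw [← h, h0]; rfl)) hab
        · exact h0
      refine ⟨⟨a - 1, by omega⟩, ?_⟩
      have e : a.1 - 1 + 1 = a.1 := by omega
      simp only [f, e, h]
    intro e
    induction e with
    | _ a b =>
      rintro ⟨hab, h | h⟩
      · exact aux a b hab h
      · rw [Sym2.eq_swap]; exact aux b a hab.symm h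
  have h2 : Nat.card (caterpillar n).edgeSet ≤ n - 1 := by
    rw [Nat.card_coe_set_eq]
    refine (Set.ncard_le_ncard hsub (Set.toFinite _)).trans ?_
    rw [← Nat.card_coe_set_eq]
    exact (Finite.card_range_le f).trans (by simp)
  rw [Nat.card_fin] at h1 ⊢
  omega

/-- The caterpillar on an even, positive number of vertices is cubic: the root, the even vertices
and the last spine vertex are leaves, and all other spine vertices have degree 3. -/
lemma caterpillar_cubic {m : ℕ} (hm : 2 ≤ m) (t : Fin (2 * m - 2)) :
    ((caterpillar (2 * m - 2)).neighborSet t).ncard = 1 ∨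
      ((caterpillar (2 * m - 2)).neighborSet t).ncard = 3 := by
  obtain ⟨t, ht⟩ := t
  by_cases h0 : t = 0
  · left
    rw [Set.ncard_eq_one]
    refine ⟨⟨1, by omega⟩, ?_⟩
    ext ⟨j, hj⟩
    simp only [mem_neighborSet, caterpillar, par, Set.mem_singleton_iff, Fin.mk.injEq, ne_eq]
    split_ifs <;> omega
  by_cases hodd : t % 2 = 1 ∧ t + 2 < 2 * m - 2
  · right
    rw [Set.ncard_eq_three]
    refine ⟨⟨t - 2, by omega⟩, ⟨t + 1, by omega⟩, ⟨t + 2, by omega⟩, ?_, ?_, ?_, ?_⟩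
    · simp only [ne_eq, Fin.mk.injEq]; omega
    · simp only [ne_eq, Fin.mk.injEq]; omega
    · simp only [ne_eq, Fin.mk.injEq]; omega
    ext ⟨j, hj⟩
    simp only [mem_neighborSet, caterpillar, par, Set.mem_singleton_iff, Set.mem_insert_iff,
      Fin.mk.injEq, ne_eq]
    split_ifs <;> omega
  · left
    rw [Set.ncard_eq_one]
    refine ⟨⟨par t, by have := par_lt (Nat.pos_of_ne_zero h0); omega⟩, ?_⟩
    ext ⟨j, hj⟩
    simp only [mem_neighborSet, caterpillar, par, Set.mem_singleton_iff, Fin.mk.injEq, ne_eq]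
    split_ifs <;> omega

lemma exists_cubic_tree {m : ℕ} (hm : 2 ≤ m) :
    ∃ T : SimpleGraph (Fin (2 * m - 2)), T.IsTree ∧
      (∀ t, (T.neighborSet t).ncard = 1 ∨ (T.neighborSet t).ncard = 3) ∧
      {t | (T.neighborSet t).ncard = 1}.ncard = m := by
  have h1 := caterpillar_isTree (n := 2 * m - 2) (by omega)
  have h2 := caterpillar_cubic hm
  refine ⟨_, h1, h2, ?_⟩
  have := ncard_leaves _ h1 h2
  rw [Fintype.card_fin] at this
  omega

lemma exists_treeEmbedding {V : Type} [Fintype V] (G : SimpleGraph V)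
    (hV : 2 ≤ Fintype.card V) : ∃ n, Nonempty (TreeEmbedding G (Fin n)) := by
  obtain ⟨T, hT, hc, hl⟩ := exists_cubic_tree hV
  have hcard : Nat.card V = Nat.card {t | (T.neighborSet t).ncard = 1} := by
    rw [Nat.card_coe_set_eq, hl, Nat.card_eq_fintype_card]
  let e := Classical.choice (Finite.card_eq.1 hcard)
  exact ⟨_, ⟨{
    T := T
    b := fun v => (e v).1
    isTree := hT
    cubic := hc
    leaf_b := fun v => (e v).2
    inj := Subtype.val_injective.comp e.injective
    surj_leaf := fun t ht => ⟨e.symm ⟨t, ht⟩, by simp⟩ }⟩⟩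

/-- The host tree of a tree embedding of `G` has exactly `2 * |V(G)| - 2` vertices. -/
lemma TreeEmbedding.card_eq {V W : Type} [Fintype V] [Fintype W] {G : SimpleGraph V}
    (E : TreeEmbedding G W) : Fintype.card W = 2 * Fintype.card V - 2 := by
  have h := ncard_leaves E.T E.isTree E.cubic
  have h2 : {t : W | (E.T.neighborSet t).ncard = 1} = Set.range E.b := by
    ext t
    exact ⟨E.surj_leaf t, by rintro ⟨v, rfl⟩; exact E.leaf_b v⟩
  rw [h2, ← Nat.card_coe_set_eq, Nat.card_range_of_injective E.inj,
    Nat.card_eq_fintype_card] at h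
  omega

/-! ### Vertex congestion versus edge congestion -/

/-- If every routing through `t` uses at least `k` tree edges at `t`, then double counting the
pairs (routing, tree edge at `t` used by it) bounds `k * conV t`. -/
lemma mul_conV_le {V W : Type} [Fintype V] [Fintype W] {G : SimpleGraph V}
    (E : TreeEmbedding G W) (w : Sym2 V → ℕ) (t : W) (k : ℕ)
    (hk : ∀ e ∈ G.edgeFinset, RoutesThruV E e t →
      k ≤ ((E.T.neighborFinset t).filter fun y => RoutesThruE E e s(t, y)).card) :
    k * conV E w t ≤ (E.T.neighborSet t).ncard * ecOf E w := by
  calc k * conV E w t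
      = ∑ e ∈ G.edgeFinset.filter (fun e => RoutesThruV E e t), k * w e := by
        rw [conV, Finset.mul_sum]
    _ ≤ ∑ e ∈ G.edgeFinset.filter (fun e => RoutesThruV E e t),
          ∑ y ∈ E.T.neighborFinset t, if RoutesThruE E e s(t, y) then w e else 0 := by
        refine Finset.sum_le_sum fun e he => ?_
        rw [Finset.mem_filter] at he
        rw [← Finset.sum_filter, Finset.sum_const, smul_eq_mul]
        exact Nat.mul_le_mul_right _ (hk e he.1 he.2)
    _ ≤ ∑ e ∈ G.edgeFinset,
          ∑ y ∈ E.T.neighborFinset t, if RoutesThruE E e s(t, y) then w e else 0 :=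
        Finset.sum_le_sum_of_subset (Finset.filter_subset _ _)
    _ = ∑ y ∈ E.T.neighborFinset t, conE E w s(t, y) := by
        rw [Finset.sum_comm]
        exact Finset.sum_congr rfl fun y _ => by rw [conE, Finset.sum_filter]
    _ ≤ ∑ _y ∈ E.T.neighborFinset t, ecOf E w := by
        refine Finset.sum_le_sum fun y hy => ?_
        rw [mem_neighborFinset] at hy
        exact Finset.le_sup (f := conE E w) (by rwa [mem_edgeFinset, mem_edgeSet])
    _ = (E.T.neighborSet t).ncard * ecOf E w := by
        rw [Finset.sum_const, smul_eq_mul, Set.ncard_eq_toFinset_card']; rfl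

/-- The tree edges at `t` used by a single path `p` routing `uv` are among those counted for the
edge `uv`. -/
lemma ncard_le_card_filter {V W : Type} [Fintype W] {G : SimpleGraph V}
    (E : TreeEmbedding G W) {u v : V} (p : E.T.Walk (E.b u) (E.b v)) (hp : p.IsPath) (t : W) :
    (p.toSubgraph.neighborSet t).ncard
      ≤ ((E.T.neighborFinset t).filter fun y => RoutesThruE E s(u, v) s(t, y)).card := by
  rw [← Set.ncard_coe_finset]
  refine Set.ncard_le_ncard (fun y hy => ?_) (Set.toFinite _)
  rw [Subgraph.mem_neighborSet] at hy
  rw [Finset.mem_coe, Finset.mem_filter, mem_neighborFinset]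
  exact ⟨hy.adj_sub, u, v, rfl, p, hp, Walk.adj_toSubgraph_iff_mem_edges.1 hy⟩

/-- At a leaf the bound `conV t ≤ ec` holds, at an internal vertex `2 * conV t ≤ 3 * ec`. The
right-hand side, `⌈3 * ec / 2⌉`, covers both. -/
lemma conV_le {V W : Type} [Fintype V] [Fintype W] {G : SimpleGraph V}
    (E : TreeEmbedding G W) (w : Sym2 V → ℕ) (t : W) :
    conV E w t ≤ (3 * ecOf E w + 1) / 2 := by
  rcases E.cubic t with ht | ht
  · have h := mul_conV_le E w t 1 ?_
    · rw [ht] at h; omega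
    rintro e he ⟨u, v, rfl, p, hp, hmem⟩
    refine le_trans ?_ (ncard_le_card_filter E p hp t)
    -- The ends of an edge of `G` are distinct, so its routing has at least one edge.
    have huv : u ≠ v := by
      rw [mem_edgeFinset, mem_edgeSet] at he
      exact he.ne
    have hnil : ¬ p.Nil := Walk.not_nil_of_ne (E.inj.ne huv)
    obtain ⟨f, hf, htf⟩ := (Walk.mem_support_iff_exists_mem_edges_of_not_nil hnil).1 hmem
    obtain ⟨y, rfl⟩ := Sym2.mem_iff_exists.1 htf
    rw [Nat.one_le_iff_ne_zero, Ne, Set.ncard_eq_zero (Set.toFinite _)]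
    exact Set.Nonempty.ne_empty ⟨y, Walk.adj_toSubgraph_iff_mem_edges.2 hf⟩
  · have h := mul_conV_le E w t 2 ?_
    · rw [ht] at h; omega
    rintro e he ⟨u, v, rfl, p, hp, hmem⟩
    refine le_trans ?_ (ncard_le_card_filter E p hp t)
    -- As `t` is not a leaf, it is an inner vertex of the path `p`.
    have hne : ∀ x, E.b x ≠ t := by
      rintro x rfl
      have := E.leaf_b x
      omega
    obtain ⟨i, rfl, hi⟩ := Walk.mem_support_iff_exists_getVert.1 hmem
    refine (hp.ncard_neighborSet_toSubgraph_internal_eq_two ?_ ?_).ge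
    · rintro rfl
      exact hne u (by simp)
    · refine lt_of_le_of_ne hi ?_
      rintro rfl
      exact hne v (by simp)

lemma sum_two_pow_le {V : Type} [Fintype V] {G : SimpleGraph V} {n : ℕ}
    (E : TreeEmbedding G (Fin n)) (w : Sym2 V → ℕ) (c : ℕ) (h : ∀ t, conV E w t ≤ c) :
    ∑ t : Fin n, 2 ^ conV E w t ≤ (2 * Fintype.card V - 2) * 2 ^ c := by
  rw [← E.card_eq, ← Finset.card_univ, ← smul_eq_mul]
  exact Finset.sum_le_card_nsmul _ _ _ fun t _ => Nat.pow_le_pow_right two_pos (h t)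

theorem exists_treeEmbedding_total_time {V : Type} [Fintype V] (G : SimpleGraph V)
    (hV : 2 ≤ Fintype.card V) (w : Sym2 V → ℕ) :
    (∃ (n : ℕ) (E : TreeEmbedding G (Fin n)),
        ∑ t : Fin n, 2 ^ conV E w t ≤ (2 * Fintype.card V - 2) * 2 ^ vcG G w) ∧
      ∃ (n : ℕ) (E : TreeEmbedding G (Fin n)),
        ∑ t : Fin n, 2 ^ conV E w t
          ≤ (2 * Fintype.card V - 2) * 2 ^ ((3 * ecG G w + 1) / 2) := by
  obtain ⟨n₀, ⟨E₀⟩⟩ := exists_treeEmbedding G hV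
  constructor
  · obtain ⟨n, E, hE⟩ : vcG G w ∈ {k | ∃ (n : ℕ) (E : TreeEmbedding G (Fin n)), vcOf E w = k} :=
      Nat.sInf_mem ⟨_, n₀, E₀, rfl⟩
    refine ⟨n, E, sum_two_pow_le E w _ fun t => ?_⟩
    rw [← hE]
    exact Finset.le_sup (f := conV E w) (Finset.mem_univ t)
  · obtain ⟨n, E, hE⟩ : ecG G w ∈ {k | ∃ (n : ℕ) (E : TreeEmbedding G (Fin n)), ecOf E w = k} :=
      Nat.sInf_mem ⟨_, n₀, E₀, rfl⟩
    refine ⟨n, E, sum_two_pow_le E w _ fun t => ?_⟩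
    rw [← hE]
    exact conV_le E w t
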